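/- arXiv:2508.17288 — 8 statements merged into one kernel-verified Lean document; each statement's English description precedes it below -/
import Mathlib

section
/- Let f : ℝ^d → ℝ be differentiable and μ-strongly convex with μ ≥ 0, let x* be a minimizer of f with f* = f(x*), let x ∈ ℝ^d with ∇f(x) ≠ 0, and let η satisfy 0 ≤ η ≤ 2(f(x) − f*)/‖∇f(x)‖². Then the gradient step x⁺ = x − η∇f(x) satisfies ‖x⁺ − x*‖² ≤ (1 − μη)‖x − x*‖². -/
/-!
Expanding the square, with `g = ∇f x` and `D = ‖x - x*‖²`,
`‖x⁺ - x*‖² = D - 2η⟨g, x - x*⟩ + η²‖g‖²`. Strong convexity between `x` and `x*` gives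
`⟨g, x - x*⟩ ≥ f x - f x* + (μ/2) D`, and the stepsize bound gives
`η²‖g‖² ≤ 2η (f x - f x*)`; the function gaps cancel and `(1 - μη) D` remains.
-/

local notation "⟪" x ", " y "⟫" => @inner ℝ _ _ x y

/-- One gradient step with a stepsize at most twice the Polyak stepsize,
for a μ-strongly convex differentiable function, contracts the squared distance to a
minimizer by a factor (1 - μη). -/
theorem polyak_step_strongly_convex
    (d : ℕ) (f : EuclideanSpace ℝ (Fin d) → ℝ) (μ : ℝ) (hμ : 0 ≤ μ)
    (hf : Differentiable ℝ f)
    (hsc : ∀ x y : EuclideanSpace ℝ (Fin d),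
      f y ≥ f x + ⟪gradient f x, y - x⟫ + μ / 2 * ‖y - x‖ ^ 2)
    (xstar : EuclideanSpace ℝ (Fin d)) (hmin : ∀ z, f xstar ≤ f z)
    (x : EuclideanSpace ℝ (Fin d)) (hgrad : gradient f x ≠ 0)
    (η : ℝ) (hη0 : 0 ≤ η) (hη : η ≤ 2 * (f x - f xstar) / ‖gradient f x‖ ^ 2) :
    ‖(x - η • gradient f x) - xstar‖ ^ 2 ≤ (1 - μ * η) * ‖x - xstar‖ ^ 2 := by
  have hpos : 0 < ‖gradient f x‖ ^ 2 := by positivity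
  have hstep : η * ‖gradient f x‖ ^ 2 ≤ 2 * (f x - f xstar) := (le_div_iff₀ hpos).mp hη
  have hlower := hsc x xstar
  rw [← neg_sub x xstar, inner_neg_right, norm_neg] at hlower
  have hexpand : ‖(x - η • gradient f x) - xstar‖ ^ 2
      = ‖x - xstar‖ ^ 2 - 2 * η * ⟪gradient f x, x - xstar⟫ + η ^ 2 * ‖gradient f x‖ ^ 2 := by
    rw [sub_right_comm, norm_sub_sq_real, real_inner_smul_right, norm_smul, mul_pow,
      Real.norm_eq_abs, sq_abs, real_inner_comm]
    ring
  rw [hexpand]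
  -- Strong convexity at `(x, xstar)` bounds the cross term; the stepsize bound absorbs
  -- the quadratic term `η ^ 2 * ‖∇f x‖ ^ 2`. Both are scaled by `η ≥ 0`.
  have hcross := mul_le_mul_of_nonneg_left hlower hη0
  have hquad := mul_le_mul_of_nonneg_left hstep hη0
  linarith
end

section
/- Let f : ℝ^d → ℝ be differentiable and convex, with minimizer x* and optimal value f* = f(x*). Let x ∈ ℝ^d with ∇f(x) ≠ 0 and let x⁺ = x − η∇f(x) with the Polyak stepsize η = (f(x) − f*)/‖∇f(x)‖². Then ‖x⁺ − x*‖² ≤ ‖x − x*‖² − (f(x) − f*)²/‖∇f(x)‖². -/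
/-!
Write `g` for the gradient at `x` and `η` for the Polyak stepsize. Expanding the square,
`‖x - η g - x*‖² = ‖x - x*‖² - 2 η ⟪x - x*, g⟫ + η² ‖g‖²`. Convexity gives
`⟪x - x*, g⟫ ≥ f x - f x*`, and `η ≥ 0` by minimality of `x*`, so the right side is at most
`‖x - x*‖² - 2 η (f x - f x*) + η² ‖g‖²`, which the choice of `η` turns into the claim.
-/

local notation "⟪" x ", " y "⟫" => @inner ℝ _ _ x y

/-- One gradient step with the Polyak stepsize on a convex differentiable
function decreases the squared distance to a minimizer by (f(x) - f*)²/‖∇f(x)‖². -/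
theorem polyak_step_convex_descent
    (d : ℕ) (f : EuclideanSpace ℝ (Fin d) → ℝ)
    (hf : Differentiable ℝ f)
    (hconv : ∀ x y : EuclideanSpace ℝ (Fin d),
      f y ≥ f x + ⟪gradient f x, y - x⟫)
    (xstar : EuclideanSpace ℝ (Fin d)) (hmin : ∀ z, f xstar ≤ f z)
    (x : EuclideanSpace ℝ (Fin d)) (hgrad : gradient f x ≠ 0) :
    ‖(x - ((f x - f xstar) / ‖gradient f x‖ ^ 2) • gradient f x) - xstar‖ ^ 2
      ≤ ‖x - xstar‖ ^ 2 - (f x - f xstar) ^ 2 / ‖gradient f x‖ ^ 2 := by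
  have h1 := hconv x xstar
  have h2 := hmin x
  have hpos : 0 < ‖gradient f x‖ ^ 2 := by positivity
  generalize gradient f x = g at *
  have hinner : f x - f xstar ≤ ⟪x - xstar, g⟫ := by
    have h3 : ⟪g, xstar - x⟫ = -⟪x - xstar, g⟫ := by
      rw [← neg_sub x xstar, inner_neg_right, real_inner_comm]
    linarith
  have hη : 0 ≤ (f x - f xstar) / ‖g‖ ^ 2 := div_nonneg (by linarith) hpos.le
  -- Expand the square; with `η = (f x - f xstar) / ‖g‖²`, both `η² ‖g‖²` and
  -- `η (f x - f xstar)` equal the claimed decrease.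
  rw [sub_right_comm, norm_sub_sq_real, inner_smul_right, norm_smul, mul_pow,
    Real.norm_eq_abs, sq_abs]
  have h4 := mul_le_mul_of_nonneg_left hinner hη
  have h5 : ((f x - f xstar) / ‖g‖ ^ 2) ^ 2 * ‖g‖ ^ 2 = (f x - f xstar) ^ 2 / ‖g‖ ^ 2 := by
    field_simp
  have h6 : (f x - f xstar) / ‖g‖ ^ 2 * (f x - f xstar) = (f x - f xstar) ^ 2 / ‖g‖ ^ 2 := by
    ring
  linarith
end

section
/- Let f : ℝ^d → ℝ be differentiable and convex with minimizer x* and f* = f(x*), and suppose f has G-bounded gradients, i.e. ‖∇f(x)‖ ≤ G for all x in a set containing all iterates. Let (x^t)_{t=0}^{k} be generated by gradient descent with Polyak stepsizes, x^{t+1} = x^t − ((f(x^t) − f*)/‖∇f(x^t)‖²)∇f(x^t), with ∇f(x^t) ≠ 0 for t < k. Then min_{t ∈ {0, …, k−1}} (f(x^t) − f*) ≤ G‖x^0 − x*‖/√k. -/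
/-!
Convexity at `xᵗ` gives `f(xᵗ) - f* ≤ ⟪∇f(xᵗ), xᵗ - x*⟫`, so the Polyak step (the minimizer of the
resulting quadratic upper bound on the squared distance to `x*`) yields
`‖xᵗ⁺¹ - x*‖² + (f(xᵗ) - f*)² / ‖∇f(xᵗ)‖² ≤ ‖xᵗ - x*‖²` (`polyak_step_decrease`).
Telescoping bounds the sum of the `k` quotients by `‖x⁰ - x*‖²`; if every gap exceeded
`G‖x⁰ - x*‖/√k`, each quotient would exceed `‖x⁰ - x*‖²/k`, a contradiction.
-/

local notation "⟪" x ", " y "⟫" => @inner ℝ _ _ x y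

/-- One Polyak step along `g` from a point at displacement `u` from the minimizer, with suboptimality
gap `δ`; the hypothesis `δ ≤ ⟪g, u⟫` is the convexity inequality. -/
theorem polyak_step_decrease {E : Type*} [NormedAddCommGroup E] [InnerProductSpace ℝ E]
    (u g : E) (δ : ℝ) (hg : g ≠ 0) (hδ : 0 ≤ δ) (h : δ ≤ inner ℝ g u) :
    ‖u - (δ / ‖g‖ ^ 2) • g‖ ^ 2 + δ ^ 2 / ‖g‖ ^ 2 ≤ ‖u‖ ^ 2 := by
  have hpos : 0 < ‖g‖ := norm_pos_iff.mpr hg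
  rw [norm_sub_sq_real, inner_smul_right, norm_smul, mul_pow, Real.norm_eq_abs, sq_abs,
    real_inner_comm]
  have h1 : (δ / ‖g‖ ^ 2) ^ 2 * ‖g‖ ^ 2 = δ ^ 2 / ‖g‖ ^ 2 := by field_simp
  have h2 : δ / ‖g‖ ^ 2 * δ ≤ δ / ‖g‖ ^ 2 * inner ℝ g u :=
    mul_le_mul_of_nonneg_left h (by positivity)
  have h3 : δ / ‖g‖ ^ 2 * δ = δ ^ 2 / ‖g‖ ^ 2 := by ring
  linarith

/-- Gradient descent with Polyak stepsizes on a convex differentiable function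
with G-bounded gradients satisfies min_{t < k} (f(xᵗ) - f*) ≤ G‖x⁰ - x*‖/√k. -/
theorem polyak_gd_convex_gbounded_rate
    (d : ℕ) (f : EuclideanSpace ℝ (Fin d) → ℝ)
    (hf : Differentiable ℝ f)
    (hconv : ∀ x y : EuclideanSpace ℝ (Fin d),
      f y ≥ f x + ⟪gradient f x, y - x⟫)
    (xstar : EuclideanSpace ℝ (Fin d)) (hmin : ∀ z, f xstar ≤ f z)
    (G : ℝ) (x : ℕ → EuclideanSpace ℝ (Fin d)) (k : ℕ) (hk : 0 < k)
    (hG : ∀ t < k, ‖gradient f (x t)‖ ≤ G)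
    (hgrad : ∀ t < k, gradient f (x t) ≠ 0)
    (hstep : ∀ t < k, x (t + 1) =
      x t - ((f (x t) - f xstar) / ‖gradient f (x t)‖ ^ 2) • gradient f (x t)) :
    ∃ t < k, f (x t) - f xstar ≤ G * ‖x 0 - xstar‖ / Real.sqrt k := by
  by_contra! hcon
  have key : ∀ n ≤ k, ‖x n - xstar‖ ^ 2 +
      ∑ t ∈ Finset.range n, (f (x t) - f xstar) ^ 2 / ‖gradient f (x t)‖ ^ 2
        ≤ ‖x 0 - xstar‖ ^ 2 := by
    intro n
    induction n with
    | zero => simp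
    | succ n ih =>
      intro hn
      have hc := hconv (x n) xstar
      rw [← neg_sub (x n) xstar, inner_neg_right] at hc
      have hs := polyak_step_decrease (x n - xstar) (gradient f (x n)) (f (x n) - f xstar)
        (hgrad n hn) (sub_nonneg.mpr (hmin _)) (by linarith)
      rw [sub_right_comm, ← hstep n hn] at hs
      rw [Finset.sum_range_succ]
      linarith [ih (by omega)]
  have hkR : (0 : ℝ) < k := by exact_mod_cast hk
  have hterm : ∀ t ∈ Finset.range k, ‖x 0 - xstar‖ ^ 2 / k <
      (f (x t) - f xstar) ^ 2 / ‖gradient f (x t)‖ ^ 2 := by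
    intro t ht
    have ht' := Finset.mem_range.mp ht
    have hg : 0 < ‖gradient f (x t)‖ := norm_pos_iff.mpr (hgrad t ht')
    have h1 : ‖x 0 - xstar‖ / √k < (f (x t) - f xstar) / ‖gradient f (x t)‖ := by
      rw [lt_div_iff₀ hg]
      calc ‖x 0 - xstar‖ / √k * ‖gradient f (x t)‖ ≤ ‖x 0 - xstar‖ / √k * G :=
            mul_le_mul_of_nonneg_left (hG t ht') (by positivity)
        _ = G * ‖x 0 - xstar‖ / √k := by ring
        _ < _ := hcon t ht'
    have h2 := pow_lt_pow_left₀ h1 (by positivity) two_ne_zero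
    rwa [div_pow, div_pow, Real.sq_sqrt hkR.le] at h2
  have hsum := Finset.sum_lt_sum_of_nonempty (Finset.nonempty_range_iff.mpr hk.ne') hterm
  rw [Finset.sum_const, Finset.card_range, nsmul_eq_mul, mul_div_cancel₀ _ hkR.ne'] at hsum
  linarith [key k le_rfl, sq_nonneg ‖x k - xstar‖]
end

section
/- Let f : ℝ^d → ℝ be differentiable, L-smooth (L > 0), with minimizer x* and f* = f(x*). Let x, y ∈ ℝ^d satisfy f(x) > f(y), ∇f(x) ≠ 0, and the separation condition |f(x) − f(y)| ≥ a·(max{f(x), f(y)} − f*) for some 0 < a < 1. Then the Twin-Polyak stepsize η = 2(f(x) − f(y))/‖∇f(x)‖² satisfies η ≥ 2a(f(x) − f*)/‖∇f(x)‖² ≥ a/L. -/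
/-!
The first inequality is the separation condition, since `f x > f y` removes the absolute value and
the maximum. The second is the descent lemma: one gradient step with stepsize `1 / L` from `x` lowers
`f` by at least `‖∇f(x)‖² / (2L)`, and the value reached is at least the minimum, so
`‖∇f(x)‖² ≤ 2L (f x - f*)`.
-/

local notation "⟪" x ", " y "⟫" => @inner ℝ _ _ x y

/-- Under the separation assumption (a), the Twin-Polyak stepsize
η = 2(f(x) - f(y))/‖∇f(x)‖² is bounded below by 2a(f(x) - f*)/‖∇f(x)‖² ≥ a/L
for an L-smooth function. -/
theorem twin_polyak_stepsize_lower_bound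
    (d : ℕ) (f : EuclideanSpace ℝ (Fin d) → ℝ) (L : ℝ) (hL : 0 < L)
    (hf : Differentiable ℝ f)
    (hsmooth : ∀ x y : EuclideanSpace ℝ (Fin d),
      f y ≤ f x + ⟪gradient f x, y - x⟫ + L / 2 * ‖y - x‖ ^ 2)
    (xstar : EuclideanSpace ℝ (Fin d)) (hmin : ∀ z, f xstar ≤ f z)
    (x y : EuclideanSpace ℝ (Fin d)) (hxy : f x > f y)
    (hgrad : gradient f x ≠ 0)
    (a : ℝ) (ha0 : 0 < a) (ha1 : a < 1)
    (hsep : |f x - f y| ≥ a * (max (f x) (f y) - f xstar)) :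
    2 * (f x - f y) / ‖gradient f x‖ ^ 2 ≥ 2 * a * (f x - f xstar) / ‖gradient f x‖ ^ 2
      ∧ 2 * a * (f x - f xstar) / ‖gradient f x‖ ^ 2 ≥ a / L := by
  have hG : 0 < ‖gradient f x‖ ^ 2 := by positivity
  rw [abs_of_pos (sub_pos.mpr hxy), max_eq_left hxy.le] at hsep
  -- Smoothness evaluated at the gradient step `x - (1/L) ∇f(x)`.
  have hstep := hsmooth x (x - (1 / L) • gradient f x)
  rw [sub_sub_cancel_left, inner_neg_right, real_inner_smul_right, real_inner_self_eq_norm_sq,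
    norm_neg, norm_smul, mul_pow, Real.norm_eq_abs, sq_abs] at hstep
  have hlow := hmin (x - (1 / L) • gradient f x)
  have hdescent : ‖gradient f x‖ ^ 2 ≤ 2 * L * (f x - f xstar) := by
    have hcoef : L / 2 * ((1 / L) ^ 2 * ‖gradient f x‖ ^ 2)
        = 1 / L * ‖gradient f x‖ ^ 2 / 2 := by
      field_simp
    have hgap : 1 / L * ‖gradient f x‖ ^ 2 ≤ 2 * (f x - f xstar) := by linarith
    calc ‖gradient f x‖ ^ 2 = L * (1 / L * ‖gradient f x‖ ^ 2) := by field_simp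
      _ ≤ L * (2 * (f x - f xstar)) := mul_le_mul_of_nonneg_left hgap hL.le
      _ = 2 * L * (f x - f xstar) := by ring
  constructor
  · exact div_le_div_of_nonneg_right (by linarith) hG.le
  · rw [ge_iff_le, div_le_div_iff₀ hL hG]
    calc a * ‖gradient f x‖ ^ 2 ≤ a * (2 * L * (f x - f xstar)) :=
          mul_le_mul_of_nonneg_left hdescent ha0.le
      _ = 2 * a * (f x - f xstar) * L := by ring
end

section
/- Let f : ℝ^d → ℝ be differentiable, μ-strongly convex with μ > 0, and L-smooth with L ≥ μ, with minimizer x* and f* = f(x*). Let 0 < a < 1 and let (x^k) be a sequence satisfying x^{k+1} = x^k − η_k ∇f(x^k) for stepsizes η_k with a/L ≤ η_k and η_k‖∇f(x^k)‖² ≤ 2(f(x^k) − f*). Then for all k, ‖x^k − x*‖² ≤ (1 − aμ/L)^k ‖x^0 − x*‖². -/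
/-!
Write `D k = ‖x k - x*‖²` and `g = ∇f (x k)`. Expanding the square,
`D (k+1) = D k - 2 η ⟪g, x k - x*⟫ + η² ‖g‖²`. Strong convexity gives
`⟪g, x k - x*⟫ ≥ f (x k) - f* + (μ/2) D k`, and the upper stepsize bound gives
`η² ‖g‖² ≤ 2 η (f (x k) - f*)`; the function gaps cancel, leaving
`D (k+1) ≤ (1 - η μ) D k ≤ (1 - a μ / L) D k` by the lower stepsize bound. Since
`0 ≤ 1 - a μ / L`, induction on `k` concludes.
-/

local notation "⟪" x ", " y "⟫" => @inner ℝ _ _ x y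

/-- Gradient descent on a μ-strongly convex, L-smooth function with stepsizes
satisfying a/L ≤ η_k and η_k‖∇f(xᵏ)‖² ≤ 2(f(xᵏ) - f*) converges linearly with
factor (1 - aμ/L). -/
theorem twin_polyak_linear_convergence
    (d : ℕ) (f : EuclideanSpace ℝ (Fin d) → ℝ) (μ L : ℝ)
    (hμ : 0 < μ) (hμL : μ ≤ L)
    (hf : Differentiable ℝ f)
    (hsc : ∀ x y : EuclideanSpace ℝ (Fin d),
      f y ≥ f x + ⟪gradient f x, y - x⟫ + μ / 2 * ‖y - x‖ ^ 2)
    (hsmooth : ∀ x y : EuclideanSpace ℝ (Fin d),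
      f y ≤ f x + ⟪gradient f x, y - x⟫ + L / 2 * ‖y - x‖ ^ 2)
    (xstar : EuclideanSpace ℝ (Fin d)) (hmin : ∀ z, f xstar ≤ f z)
    (a : ℝ) (ha0 : 0 < a) (ha1 : a < 1)
    (x : ℕ → EuclideanSpace ℝ (Fin d)) (η : ℕ → ℝ)
    (hstep : ∀ k, x (k + 1) = x k - η k • gradient f (x k))
    (hηlb : ∀ k, a / L ≤ η k)
    (hηub : ∀ k, η k * ‖gradient f (x k)‖ ^ 2 ≤ 2 * (f (x k) - f xstar)) :
    ∀ k, ‖x k - xstar‖ ^ 2 ≤ (1 - a * μ / L) ^ k * ‖x 0 - xstar‖ ^ 2 := by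
  have hL : 0 < L := hμ.trans_le hμL
  have hq : 0 ≤ 1 - a * μ / L := by
    rw [sub_nonneg, div_le_one hL]
    nlinarith
  intro k
  induction k with
  | zero => simp
  | succ k ih =>
    have hη : 0 ≤ η k := (div_pos ha0 hL).le.trans (hηlb k)
    have hsub : x (k + 1) - xstar = (x k - xstar) - η k • gradient f (x k) := by
      rw [hstep k]; abel
    have hexp : ‖x (k + 1) - xstar‖ ^ 2 = ‖x k - xstar‖ ^ 2
        - 2 * (η k * ⟪gradient f (x k), x k - xstar⟫)
        + η k * (η k * ‖gradient f (x k)‖ ^ 2) := by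
      rw [hsub, norm_sub_sq_real, inner_smul_right, real_inner_comm, norm_smul, mul_pow,
        Real.norm_eq_abs, sq_abs]
      ring
    have hconv := hsc (x k) xstar
    rw [← neg_sub (x k) xstar, inner_neg_right, norm_neg] at hconv
    -- The upper bound on the stepsize cancels the function-value gap given by strong convexity.
    have hcontr : ‖x (k + 1) - xstar‖ ^ 2 ≤ (1 - η k * μ) * ‖x k - xstar‖ ^ 2 := by
      have h1 := mul_le_mul_of_nonneg_left (hηub k) hη
      have h2 := mul_le_mul_of_nonneg_left hconv hη
      rw [hexp]
      linarith
    have hrate : 1 - η k * μ ≤ 1 - a * μ / L := by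
      have h := mul_le_mul_of_nonneg_right (hηlb k) hμ.le
      rw [div_mul_eq_mul_div] at h
      linarith
    calc ‖x (k + 1) - xstar‖ ^ 2 ≤ (1 - η k * μ) * ‖x k - xstar‖ ^ 2 := hcontr
      _ ≤ (1 - a * μ / L) * ‖x k - xstar‖ ^ 2 :=
        mul_le_mul_of_nonneg_right hrate (sq_nonneg _)
      _ ≤ (1 - a * μ / L) * ((1 - a * μ / L) ^ k * ‖x 0 - xstar‖ ^ 2) :=
        mul_le_mul_of_nonneg_left ih hq
      _ = (1 - a * μ / L) ^ (k + 1) * ‖x 0 - xstar‖ ^ 2 := by ring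
end

section
/- Let f : ℝ^d → ℝ be differentiable and convex with minimizer x* and f* = f(x*). Let x, y ∈ ℝ^d with f(x) > f(y), ∇f(x) ≠ 0, and suppose there exist constants 0 < a < 1 and 0 < b < 1 with f(x) − f(y) ≥ a(f(x) − f*) and f(y) − f* ≥ b(f(x) − f*). Then the Twin-Polyak step x⁺ = x − 2((f(x) − f(y))/‖∇f(x)‖²)∇f(x) satisfies ‖x⁺ − x*‖² ≤ ‖x − x*‖² − 4ab·(f(x) − f*)²/‖∇f(x)‖². -/
/-!
Write `g = ∇f(x)` and `t = f(x) - f(y)`. Expanding the square with stepsize `2t/‖g‖²` gives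
`‖x⁺ - x*‖² = ‖x - x*‖² - 4t(⟨x - x*, g⟩ - t)/‖g‖²`. Convexity gives `⟨x - x*, g⟩ ≥ f(x) - f*`,
so the second factor is at least `f(y) - f* ≥ b(f(x) - f*)`, while `t ≥ a(f(x) - f*)`.
-/

local notation "⟪" x ", " y "⟫" => @inner ℝ _ _ x y

/-- Under Assumptions (a) and (b), one Twin-Polyak step on a convex
differentiable function decreases the squared distance to the minimizer by at least
4ab(f(x) - f*)²/‖∇f(x)‖². -/
theorem twin_polyak_step_descent
    (d : ℕ) (f : EuclideanSpace ℝ (Fin d) → ℝ)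
    (hf : Differentiable ℝ f)
    (hconv : ∀ x y : EuclideanSpace ℝ (Fin d),
      f y ≥ f x + ⟪gradient f x, y - x⟫)
    (xstar : EuclideanSpace ℝ (Fin d)) (hmin : ∀ z, f xstar ≤ f z)
    (x y : EuclideanSpace ℝ (Fin d)) (hxy : f x > f y)
    (hgrad : gradient f x ≠ 0)
    (a b : ℝ) (ha0 : 0 < a) (ha1 : a < 1) (hb0 : 0 < b) (hb1 : b < 1)
    (hsepa : f x - f y ≥ a * (f x - f xstar))
    (hsepb : f y - f xstar ≥ b * (f x - f xstar)) :
    ‖(x - (2 * ((f x - f y) / ‖gradient f x‖ ^ 2)) • gradient f x) - xstar‖ ^ 2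
      ≤ ‖x - xstar‖ ^ 2 - 4 * a * b * (f x - f xstar) ^ 2 / ‖gradient f x‖ ^ 2 := by
  -- Convexity at `x`, tested against the minimizer.
  have hip : f x - f xstar ≤ ⟪x - xstar, gradient f x⟫ := by
    have h := hconv x xstar
    rw [← neg_sub x xstar, inner_neg_right, real_inner_comm] at h
    linarith
  have hG : 0 < ‖gradient f x‖ ^ 2 := by positivity
  have hΔ : 0 ≤ f x - f xstar := sub_nonneg.2 (hmin x)
  have hexp : ‖(x - (2 * ((f x - f y) / ‖gradient f x‖ ^ 2)) • gradient f x) - xstar‖ ^ 2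
      = ‖x - xstar‖ ^ 2 - 4 * ((f x - f y) * (⟪x - xstar, gradient f x⟫ - (f x - f y)))
        / ‖gradient f x‖ ^ 2 := by
    rw [sub_right_comm, norm_sub_sq_real, inner_smul_right, norm_smul, mul_pow,
      Real.norm_eq_abs, sq_abs]
    field_simp
    ring
  have hprod : a * (f x - f xstar) * (b * (f x - f xstar))
      ≤ (f x - f y) * (⟪x - xstar, gradient f x⟫ - (f x - f y)) :=
    mul_le_mul hsepa (by linarith) (by positivity) (by linarith)
  rw [hexp]
  gcongr ?_ - ?_ / _
  linarith
end

section
/- Let f : ℝ^d → ℝ be the quadratic function f(x) = (1/2)‖x‖² + c for a constant c ∈ ℝ. Let x^k, y^k ∈ ℝ^d with ‖x^k‖ > ‖y^k‖ > 0 (i.e. f(x^k) > f(y^k)), and let the Twin-Polyak update be x^{k+1} = x^k − 2((f(x^k) − f(y^k))/‖∇f(x^k)‖²)∇f(x^k), y^{k+1} = y^k. Then ‖x^{k+1}‖²/‖y^{k+1}‖² = ‖y^k‖²/‖x^k‖²; in particular f(x^{k+1}) < f(y^k), so the two sequences change their relative position at each step. -/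
/-!
Since `∇f(x) = x` (`gradient_half_normSq_add_const`), the Twin-Polyak step is the radial rescaling
`x ↦ (1 - (‖x‖² - ‖y‖²) / ‖x‖²) x = (‖y‖² / ‖x‖²) x`, so the new iterate has norm `‖y‖² / ‖x‖`.
Both claims follow from this formula.
-/

lemma gradient_half_normSq_add_const {E : Type*} [NormedAddCommGroup E] [InnerProductSpace ℝ E]
    [CompleteSpace E] (c : ℝ) (x : E) :
    gradient (fun z : E => (1 / 2 : ℝ) * ‖z‖ ^ 2 + c) x = x := by
  apply HasGradientAt.gradient
  rw [hasGradientAt_iff_hasFDerivAt]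
  have h := (((hasStrictFDerivAt_norm_sq x).hasFDerivAt).const_mul (1 / 2 : ℝ)).add_const c
  have hdual : (1 / 2 : ℝ) • 2 • innerSL ℝ x = InnerProductSpace.toDual ℝ E x := by
    ext v
    simp
  rw [hdual] at h
  exact h

/-- For the quadratic f(x) = (1/2)‖x‖² + c, one Twin-Polyak step inverts the
ratio of squared norms of the two sequences, ‖x^{k+1}‖²/‖y^{k+1}‖² = ‖yᵏ‖²/‖xᵏ‖²,
and in particular f(x^{k+1}) < f(yᵏ): the sequences swap their relative position. -/
theorem twin_polyak_quadratic_swap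
    (d : ℕ) (c : ℝ) (f : EuclideanSpace ℝ (Fin d) → ℝ)
    (hf : f = fun z => (1 / 2 : ℝ) * ‖z‖ ^ 2 + c)
    (xk yk xk1 yk1 : EuclideanSpace ℝ (Fin d))
    (hxy : ‖xk‖ > ‖yk‖) (hy : ‖yk‖ > 0)
    (hstepx : xk1 = xk - (2 * ((f xk - f yk) / ‖gradient f xk‖ ^ 2)) • gradient f xk)
    (hstepy : yk1 = yk) :
    ‖xk1‖ ^ 2 / ‖yk1‖ ^ 2 = ‖yk‖ ^ 2 / ‖xk‖ ^ 2 ∧ f xk1 < f yk := by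
  have hx : 0 < ‖xk‖ := hy.trans hxy
  have hgrad : gradient f xk = xk := by
    rw [hf]
    exact gradient_half_normSq_add_const c xk
  have hscale : xk1 = (‖yk‖ ^ 2 / ‖xk‖ ^ 2) • xk := by
    rw [hstepx, hgrad, hf, sub_eq_iff_eq_add, ← add_smul]
    have hcoef : ‖yk‖ ^ 2 / ‖xk‖ ^ 2 + 2 * (((1 / 2 : ℝ) * ‖xk‖ ^ 2 + c
        - ((1 / 2 : ℝ) * ‖yk‖ ^ 2 + c)) / ‖xk‖ ^ 2) = 1 := by
      field_simp
      ring
    rw [hcoef, one_smul]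
  have hnorm : ‖xk1‖ = ‖yk‖ ^ 2 / ‖xk‖ := by
    rw [hscale, norm_smul, Real.norm_of_nonneg (by positivity)]
    field_simp
  have hlt : ‖xk1‖ < ‖yk‖ := by
    rw [hnorm, div_lt_iff₀ hx]
    nlinarith
  refine ⟨?_, ?_⟩
  · rw [hstepy, hnorm]
    field_simp
  · have hsq : ‖xk1‖ ^ 2 < ‖yk‖ ^ 2 := by gcongr
    simp only [hf]
    linarith
end

section
/- Let f : ℝ^d → ℝ be the quadratic function f(x) = (1/2)‖x‖², and let (x^k, y^k) be the Twin-Polyak iterates started from x^0, y^0 with ‖x^0‖ > ‖y^0‖ > 0; at each step the iterate with larger ‖·‖ is replaced by (min‖·‖²/max‖·‖²) times itself (the TP update for this f), and the other is unchanged. Set ρ = ‖y^0‖²/‖x^0‖² < 1. Then for all k ≥ 0, max{‖x^k‖², ‖y^k‖²} = ρ^k ‖x^0‖²; in particular both sequences converge linearly to the solution x* = 0 with factor ρ = ‖y^0‖²/‖x^0‖². -/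
/-!
Write `ρ = ‖y 0‖ ^ 2 / ‖x 0‖ ^ 2 < 1`. If the squared norms of the larger and the smaller iterate
are `M` and `ρ * M`, a step scales the larger iterate by `ρ`, so its squared norm becomes
`ρ ^ 2 * M` while the other stays at `ρ * M`. Thus the roles are swapped, the ratio `ρ` is kept and
the maximum is multiplied by `ρ`. Induction on `k` with this pair of values as invariant gives
the formula.
-/

/-- The factor of a step equals the ratio `ρ` of the squared norms, hence the squared norm of the
updated iterate is multiplied by `ρ ^ 2`. -/
lemma norm_sq_scaled {E : Type*} [NormedAddCommGroup E] [NormedSpace ℝ E] {u v : E} {ρ M : ℝ}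
    (hM : 0 < M) (hu : ‖u‖ ^ 2 = M) (hv : ‖v‖ ^ 2 = ρ * M) :
    ‖(‖v‖ ^ 2 / ‖u‖ ^ 2) • u‖ ^ 2 = ρ * (ρ * M) := by
  rw [norm_smul, mul_pow, Real.norm_eq_abs, sq_abs, hu, hv, mul_div_cancel_right₀ _ hM.ne']
  ring

/-- For f(x) = (1/2)‖x‖², the Twin-Polyak iterates satisfy
max{‖xᵏ‖², ‖yᵏ‖²} = ρᵏ ‖x⁰‖² where ρ = ‖y⁰‖²/‖x⁰‖² < 1: both sequences converge linearly
to the solution x* = 0 with factor ρ. -/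
theorem twin_polyak_quadratic_linear_convergence
    (d : ℕ) (f : EuclideanSpace ℝ (Fin d) → ℝ)
    (hf : f = fun z => (1 / 2 : ℝ) * ‖z‖ ^ 2)
    (x y : ℕ → EuclideanSpace ℝ (Fin d))
    (hx0 : ‖x 0‖ > ‖y 0‖) (hy0 : ‖y 0‖ > 0)
    (hstep : ∀ k : ℕ,
      (‖x k‖ ≥ ‖y k‖ →
        x (k + 1) = (‖y k‖ ^ 2 / ‖x k‖ ^ 2) • x k ∧ y (k + 1) = y k) ∧
      (‖y k‖ > ‖x k‖ →
        y (k + 1) = (‖x k‖ ^ 2 / ‖y k‖ ^ 2) • y k ∧ x (k + 1) = x k)) :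
    ∀ k : ℕ, max (‖x k‖ ^ 2) (‖y k‖ ^ 2)
      = (‖y 0‖ ^ 2 / ‖x 0‖ ^ 2) ^ k * ‖x 0‖ ^ 2 := by
  have hX : 0 < ‖x 0‖ ^ 2 := pow_pos (hy0.trans hx0) 2
  have hρ0 : 0 < ‖y 0‖ ^ 2 / ‖x 0‖ ^ 2 := div_pos (pow_pos hy0 2) hX
  have hρ1 : ‖y 0‖ ^ 2 / ‖x 0‖ ^ 2 < 1 :=
    (div_lt_one hX).2 (pow_lt_pow_left₀ hx0 hy0.le two_ne_zero)
  have hρX : ‖y 0‖ ^ 2 = ‖y 0‖ ^ 2 / ‖x 0‖ ^ 2 * ‖x 0‖ ^ 2 := (div_mul_cancel₀ _ hX.ne').symm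
  -- Fixing `ρ` and `X` as variables keeps the initial norms out of the rewriting below.
  generalize ‖y 0‖ ^ 2 / ‖x 0‖ ^ 2 = ρ at *
  generalize hXdef : ‖x 0‖ ^ 2 = X at *
  have hMpos (k : ℕ) : 0 < ρ ^ k * X := mul_pos (pow_pos hρ0 k) hX
  have hlt (k : ℕ) : ρ * (ρ ^ k * X) < ρ ^ k * X := mul_lt_of_lt_one_left (hMpos k) hρ1
  have key (k : ℕ) : (‖x k‖ ^ 2 = ρ ^ k * X ∧ ‖y k‖ ^ 2 = ρ * (ρ ^ k * X)) ∨
      (‖y k‖ ^ 2 = ρ ^ k * X ∧ ‖x k‖ ^ 2 = ρ * (ρ ^ k * X)) := by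
    induction k with
    | zero => exact Or.inl ⟨by simpa using hXdef, by simpa using hρX⟩
    | succ k ih =>
      rw [pow_succ' ρ, mul_assoc]
      rcases ih with ⟨hmax, hmin⟩ | ⟨hmax, hmin⟩
      · have h : ‖y k‖ < ‖x k‖ :=
          lt_of_pow_lt_pow_left₀ 2 (norm_nonneg _) (by rw [hmax, hmin]; exact hlt k)
        obtain ⟨h1, h2⟩ := (hstep k).1 h.le
        exact Or.inr ⟨h2 ▸ hmin, h1 ▸ norm_sq_scaled (hMpos k) hmax hmin⟩
      · have h : ‖x k‖ < ‖y k‖ :=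
          lt_of_pow_lt_pow_left₀ 2 (norm_nonneg _) (by rw [hmax, hmin]; exact hlt k)
        obtain ⟨h1, h2⟩ := (hstep k).2 h
        exact Or.inl ⟨h2 ▸ hmin, h1 ▸ norm_sq_scaled (hMpos k) hmax hmin⟩
  intro k
  rcases key k with ⟨hmax, hmin⟩ | ⟨hmax, hmin⟩
  · rw [hmax, hmin, max_eq_left (hlt k).le]
  · rw [hmax, hmin, max_eq_right (hlt k).le]
end
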